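/- Let L be an r×m integer matrix of full rank r. Then there exists a finite set Λ* of positive real numbers, depending only on L, such that: for every sufficiently large positive integer p, the set of values {λ(j) : j/p ∈ J(L,p)} is contained in Λ*, where λ(j) = p^{m−r} μ_L((j/p + [0,1/p)^m) ∩ ker_T L). -/

import Mathlib

open MeasureTheory Set

noncomputable section

/-- The circle group `𝕋 = ℝ/ℤ`. -/
abbrev 𝕋 : Type := AddCircle (1 : ℝ)

/-- The group homomorphism `x ↦ Lx` induced by an integer matrix `L`. -/
def Lhom {r m : ℕ} (L : Matrix (Fin r) (Fin m) ℤ) (G : Type*) [AddCommGroup G] :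
    (Fin m → G) →+ (Fin r → G) where
  toFun x := fun i => ∑ j, L i j • x j
  map_zero' := by ext i; simp
  map_add' x y := by ext i; simp [smul_add, Finset.sum_add_distrib]

/-- `ker_𝕋 L`, the closed subgroup `{x ∈ 𝕋^m : Lx = 0}` of `𝕋^m`. -/
def kerT {r m : ℕ} (L : Matrix (Fin r) (Fin m) ℤ) : AddSubgroup (Fin m → 𝕋) :=
  (Lhom L 𝕋).ker

/-- The point `j/p = (j(1)/p, …, j(m)/p)` of `𝕋^m`. -/
def discPt (m p : ℕ) (j : Fin m → ℤ) : Fin m → 𝕋 :=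
  fun i => (((j i : ℝ) / p : ℝ) : 𝕋)

/-- The discrete torus `Λ(p) = ℤ_p^m / p ≤ 𝕋^m`, as a set. -/
def ΛSet (m p : ℕ) : Set (Fin m → 𝕋) :=
  {y | ∃ j : Fin m → ℤ, y = discPt m p j}

/-- The cube `[0, 1/p)^m ⊆ 𝕋^m`. -/
def cube0 (m p : ℕ) : Set (Fin m → 𝕋) :=
  Set.pi Set.univ fun _ : Fin m => (fun t : ℝ => (t : 𝕋)) '' Set.Ico (0 : ℝ) (1 / p)

/-- `J(L,p)`: the points `j/p ∈ Λ(p)` with `μ_L((j/p + [0,1/p)^m) ∩ ker_𝕋 L) > 0`. -/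
def Jset {r m : ℕ} (L : Matrix (Fin r) (Fin m) ℤ) (p : ℕ) (μL : Measure (kerT L)) :
    Set (Fin m → 𝕋) :=
  {y ∈ ΛSet m p | 0 < μL {x : kerT L | (x : Fin m → 𝕋) - y ∈ cube0 m p}}

/-- The weight `λ(j) = p^{m-r} μ_{L,𝕋}((j/p + [0,1/p)^m) ∩ ker_𝕋 L)`. -/
def lamVal {r m : ℕ} (L : Matrix (Fin r) (Fin m) ℤ) (p : ℕ) (μL : Measure (kerT L))
    (j : Fin m → ℤ) : ℝ :=
  (p : ℝ) ^ (m - r) * (μL {x : kerT L | (x : Fin m → 𝕋) - discPt m p j ∈ cube0 m p}).toReal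

/-- `ker_ℝ L`. -/
def kerR {r m : ℕ} (L : Matrix (Fin r) (Fin m) ℤ) : Submodule ℝ (Fin m → ℝ) :=
  LinearMap.ker (L.map (Int.cast : ℤ → ℝ)).mulVecLin

lemma mem_kerR {r m : ℕ} (L : Matrix (Fin r) (Fin m) ℤ) (x : Fin m → ℝ) :
    x ∈ kerR L ↔ ∀ a, ∑ i, (L a i : ℝ) * x i = 0 := by
  rw [kerR, LinearMap.mem_ker, funext_iff]
  rfl

lemma Lhom_coe {r m : ℕ} (L : Matrix (Fin r) (Fin m) ℤ) (x : Fin m → ℝ) (a : Fin r) :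
    Lhom L 𝕋 (fun i => (x i : 𝕋)) a = ((∑ i, (L a i : ℝ) * x i : ℝ) : 𝕋) := by
  change ∑ i, L a i • (x i : 𝕋) = _
  have : ∀ s : Finset (Fin m), ((∑ i ∈ s, (L a i : ℝ) * x i : ℝ) : 𝕋) = ∑ i ∈ s, L a i • (x i : 𝕋) := by
    intro s
    induction s using Finset.induction_on with
    | empty => simp
    | insert b s hb ih =>
      rw [Finset.sum_insert hb, Finset.sum_insert hb, AddCircle.coe_add, ih]
      congr 1
      rw [← zsmul_eq_mul, AddCircle.coe_zsmul]
  exact (this _).symm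

lemma coe_eq_zero_iff_int (x : ℝ) : ((x : ℝ) : 𝕋) = 0 ↔ ∃ n : ℤ, (n : ℝ) = x := by
  rw [AddCircle.coe_eq_zero_iff]
  simp

lemma mem_kerT_coe {r m : ℕ} (L : Matrix (Fin r) (Fin m) ℤ) (x : Fin m → ℝ) :
    (fun i => (x i : 𝕋)) ∈ kerT L ↔ ∀ a, ∃ n : ℤ, (n : ℝ) = ∑ i, (L a i : ℝ) * x i := by
  rw [kerT, AddMonoidHom.mem_ker, funext_iff]
  refine forall_congr' fun a => ?_
  rw [Lhom_coe]
  exact coe_eq_zero_iff_int _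

/-- The projection `ker_ℝ L → ker_𝕋 L`. -/
def piK {r m : ℕ} (L : Matrix (Fin r) (Fin m) ℤ) : kerR L →+ kerT L where
  toFun v := ⟨fun i => ((v : Fin m → ℝ) i : 𝕋), (mem_kerT_coe L _).2 fun a =>
    ⟨0, by rw [(mem_kerR L _).1 v.2 a]; simp⟩⟩
  map_zero' := by ext i; simp
  map_add' x y := by ext i; simp

lemma piK_apply {r m : ℕ} (L : Matrix (Fin r) (Fin m) ℤ) (v : kerR L) (i : Fin m) :
    (piK L v : Fin m → 𝕋) i = ((v : Fin m → ℝ) i : 𝕋) := rfl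

lemma continuous_piK {r m : ℕ} (L : Matrix (Fin r) (Fin m) ℤ) : Continuous (piK L) := by
  refine Continuous.subtype_mk (continuous_pi fun i => ?_) _
  exact (AddCircle.continuous_mk' (1 : ℝ)).comp ((continuous_apply i).comp continuous_subtype_val)

lemma piK_eq {r m : ℕ} {L : Matrix (Fin r) (Fin m) ℤ} {v w : kerR L} (h : piK L v = piK L w)
    (hvw : ∀ i, |(v : Fin m → ℝ) i - (w : Fin m → ℝ) i| < 1) : v = w := by
  ext i
  have h1 : ((v : Fin m → ℝ) i : 𝕋) = ((w : Fin m → ℝ) i : 𝕋) := by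
    rw [← piK_apply, ← piK_apply, h]
  rw [← sub_eq_zero, ← AddCircle.coe_sub, coe_eq_zero_iff_int] at h1
  obtain ⟨n, hn⟩ := h1
  have h2 := hvw i
  rw [← hn] at h2
  have h3 : n = 0 := by
    rw [← Int.abs_lt_one_iff]; exact_mod_cast h2
  rw [h3] at hn
  simp at hn
  linarith

/-- Cells of `ker_ℝ L`. -/
def cell {r m : ℕ} (L : Matrix (Fin r) (Fin m) ℤ) (k : Fin m → ℤ) : Set (kerR L) :=
  {v | ∀ i, ⌊(v : Fin m → ℝ) i⌋ = k i}

lemma measurable_coord {r m : ℕ} (L : Matrix (Fin r) (Fin m) ℤ) (i : Fin m) :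
    Measurable fun v : kerR L => (v : Fin m → ℝ) i :=
  (measurable_pi_apply i).comp measurable_subtype_coe

lemma measurableSet_cell {r m : ℕ} (L : Matrix (Fin r) (Fin m) ℤ) (k : Fin m → ℤ) :
    MeasurableSet (cell L k) := by
  rw [cell, Set.ofPred_forall]
  refine MeasurableSet.iInter fun i => ?_
  exact (Int.measurable_floor.comp (measurable_coord L i)) (measurableSet_singleton (k i))

lemma injOn_cell {r m : ℕ} (L : Matrix (Fin r) (Fin m) ℤ) (k : Fin m → ℤ) :
    Set.InjOn (piK L) (cell L k) := by
  intro v hv w hw h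
  refine piK_eq h fun i => ?_
  exact Int.abs_sub_lt_one_of_floor_eq_floor ((hv i).trans (hw i).symm)

lemma iUnion_cell {r m : ℕ} (L : Matrix (Fin r) (Fin m) ℤ) (A : Set (kerR L)) :
    (⋃ k, A ∩ cell L k) = A := by
  ext v
  simp only [mem_iUnion, mem_inter_iff, exists_and_left, and_iff_left_iff_imp]
  intro _
  exact ⟨fun i => ⌊(v : Fin m → ℝ) i⌋, fun i => rfl⟩

lemma disjoint_cell {r m : ℕ} (L : Matrix (Fin r) (Fin m) ℤ) :
    Pairwise (Function.onFun Disjoint (cell L)) := by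
  intro k l hkl
  refine Set.disjoint_left.2 fun v hk hl => hkl ?_
  ext i
  exact (hk i).symm.trans (hl i)

lemma measurableSet_image {r m : ℕ} (L : Matrix (Fin r) (Fin m) ℤ) {A : Set (kerR L)}
    (hA : MeasurableSet A) (hi : Set.InjOn (piK L) A) : MeasurableSet (piK L '' A) :=
  hA.image_of_continuousOn_injOn (continuous_piK L).continuousOn hi

/-- The lifted measure on one cell. -/
def nuCell {r m : ℕ} (L : Matrix (Fin r) (Fin m) ℤ) (μ : Measure (kerT L)) (k : Fin m → ℤ) :
    Measure (kerR L) :=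
  (μ.comap (fun v : cell L k => piK L v)).map Subtype.val

lemma nuCell_apply {r m : ℕ} (L : Matrix (Fin r) (Fin m) ℤ) (μ : Measure (kerT L))
    (k : Fin m → ℤ) {A : Set (kerR L)} (hA : MeasurableSet A) :
    nuCell L μ k A = μ (piK L '' (A ∩ cell L k)) := by
  rw [nuCell, Measure.map_apply measurable_subtype_coe hA]
  have : StandardBorelSpace (cell L k) := (measurableSet_cell L k).standardBorel
  have hE : MeasurableEmbedding (fun v : cell L k => piK L v) := by
    refine Measurable.measurableEmbedding ((continuous_piK L).measurable.comp measurable_subtype_coe) ?_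
    intro v w h
    exact Subtype.ext (injOn_cell L k v.2 w.2 h)
  rw [hE.comap_apply]
  congr 1
  ext x
  constructor
  · rintro ⟨v, hv, rfl⟩
    exact ⟨v, ⟨hv, v.2⟩, rfl⟩
  · rintro ⟨v, hv, rfl⟩
    exact ⟨⟨v, hv.2⟩, hv.1, rfl⟩

/-- The lifted measure. -/
def nu {r m : ℕ} (L : Matrix (Fin r) (Fin m) ℤ) (μ : Measure (kerT L)) : Measure (kerR L) :=
  Measure.sum (nuCell L μ)

lemma nu_apply {r m : ℕ} (L : Matrix (Fin r) (Fin m) ℤ) (μ : Measure (kerT L))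
    {A : Set (kerR L)} (hA : MeasurableSet A) :
    nu L μ A = ∑' k, μ (piK L '' (A ∩ cell L k)) := by
  rw [nu, Measure.sum_apply _ hA]
  exact tsum_congr fun k => nuCell_apply L μ k hA

lemma nu_of_injOn {r m : ℕ} (L : Matrix (Fin r) (Fin m) ℤ) (μ : Measure (kerT L))
    {A : Set (kerR L)} (hA : MeasurableSet A) (hi : Set.InjOn (piK L) A) :
    nu L μ A = μ (piK L '' A) := by
  rw [nu_apply L μ hA, ← measure_iUnion, ← Set.image_iUnion, iUnion_cell]
  · intro k l hkl
    refine Set.disjoint_left.2 ?_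
    rintro _ ⟨v, hv, rfl⟩ ⟨w, hw, hwv⟩
    have hvw := hi hw.1 hv.1 hwv
    rw [hvw] at hw
    exact Set.disjoint_left.1 (disjoint_cell L hkl) hv.2 hw.2
  · intro k
    exact measurableSet_image L (hA.inter (measurableSet_cell L k)) (hi.mono inter_subset_left)

lemma nu_invariant {r m : ℕ} (L : Matrix (Fin r) (Fin m) ℤ) (μ : Measure (kerT L))
    [μ.IsAddLeftInvariant] : (nu L μ).IsAddLeftInvariant := by
  refine ⟨fun v => ?_⟩
  ext A hA
  have hm : Measurable (fun w : kerR L => v + w) := measurable_const_add v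
  rw [Measure.map_apply hm hA]
  conv_lhs => rw [← iUnion_cell L A]
  rw [Set.preimage_iUnion, measure_iUnion, nu_apply L μ hA]
  · refine tsum_congr fun k => ?_
    have hi : Set.InjOn (piK L) ((fun w : kerR L => v + w) ⁻¹' (A ∩ cell L k)) := by
      intro a ha b hb hab
      have := injOn_cell L k ha.2 hb.2 (by rw [map_add, map_add, hab])
      exact add_left_cancel this
    rw [nu_of_injOn L μ (hm (hA.inter (measurableSet_cell L k))) hi,
      ← measure_preimage_add μ (piK L v) (piK L '' (A ∩ cell L k))]
    congr 1
    ext x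
    constructor
    · rintro ⟨w, hw, rfl⟩
      exact ⟨v + w, hw, map_add _ _ _⟩
    · rintro ⟨w, hw, hx⟩
      refine ⟨-v + w, by simpa using hw, ?_⟩
      rw [map_add, hx, map_neg]; simp
  · intro k l hkl
    refine Disjoint.preimage _ ?_
    exact (disjoint_cell L hkl).mono inter_subset_right inter_subset_right
  · exact fun k => hm (hA.inter (measurableSet_cell L k))

lemma nu_finite {r m : ℕ} (L : Matrix (Fin r) (Fin m) ℤ) (μ : Measure (kerT L))
    [IsProbabilityMeasure μ] : IsFiniteMeasureOnCompacts (nu L μ) := by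
  refine ⟨fun K hK => ?_⟩
  obtain ⟨R, hR⟩ := hK.isBounded.exists_norm_le
  rw [nu_apply L μ hK.measurableSet]
  rw [tsum_eq_sum (s := Fintype.piFinset fun _ : Fin m => Finset.Icc ⌊-R⌋ ⌊R⌋)]
  · exact ENNReal.sum_lt_top.2 fun k _ => measure_lt_top _ _
  · intro k hk
    have : K ∩ cell L k = ∅ := by
      rw [Set.eq_empty_iff_forall_notMem]
      rintro v ⟨hv, hvk⟩
      apply hk
      rw [Fintype.mem_piFinset]
      intro i
      have h1 : |(v : Fin m → ℝ) i| ≤ R := (norm_le_pi_norm (v : Fin m → ℝ) i).trans (hR v hv)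
      rw [abs_le] at h1
      rw [Finset.mem_Icc, ← hvk i]
      exact ⟨Int.floor_mono h1.1, Int.floor_mono h1.2⟩
    rw [this]; simp

lemma finrank_kerR {r m : ℕ} (L : Matrix (Fin r) (Fin m) ℤ)
    (hrank : (L.map (Int.cast : ℤ → ℚ)).rank = r) : Module.finrank ℝ (kerR L) = m - r := by
  have h1 : (L.map (Int.cast : ℤ → ℝ)).rank = r := by
    have hs : Function.Surjective (L.map (Int.cast : ℤ → ℚ)).mulVec := by
      have h3 : LinearMap.range (L.map (Int.cast : ℤ → ℚ)).mulVecLin = ⊤ := by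
        apply Submodule.eq_top_of_finrank_eq
        rw [← Matrix.rank, hrank, Module.finrank_fin_fun]
      exact LinearMap.range_eq_top.1 h3
    obtain ⟨B, hB⟩ := Matrix.mulVec_surjective_iff_exists_right_inverse.1 hs
    have hB' : L.map (Int.cast : ℤ → ℝ) * B.map (Rat.castHom ℝ) = 1 := by
      have h4 := congrArg (fun M => M.map (Rat.castHom ℝ)) hB
      simp only [Matrix.map_mul] at h4
      rw [Matrix.map_one _ (map_zero _) (map_one _)] at h4
      rw [← h4]
      congr 1
    apply le_antisymm
    · simpa using Matrix.rank_le_card_height (L.map (Int.cast : ℤ → ℝ))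
    · have h5 := Matrix.rank_mul_le_left (L.map (Int.cast : ℤ → ℝ)) (B.map (Rat.castHom ℝ))
      rw [hB', Matrix.rank_one] at h5
      simpa using h5
  have h2 := LinearMap.finrank_range_add_finrank_ker (L.map (Int.cast : ℤ → ℝ)).mulVecLin
  rw [← Matrix.rank, h1, Module.finrank_fin_fun] at h2
  rw [kerR]; omega

open scoped Pointwise

lemma nu_smul {r m : ℕ} (L : Matrix (Fin r) (Fin m) ℤ)
    (hrank : (L.map (Int.cast : ℤ → ℚ)).rank = r) (μ : Measure (kerT L))
    [μ.IsAddLeftInvariant] [IsProbabilityMeasure μ] (c : ℝ) (hc : 0 ≤ c) (A : Set (kerR L)) :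
    nu L μ (c • A) = ENNReal.ofReal (c ^ (m - r)) * nu L μ A := by
  have := nu_invariant L μ
  have := nu_finite L μ
  have h := Measure.isAddLeftInvariant_eq_smul (nu L μ) (Measure.addHaar : Measure (kerR L))
  have h2 : (Measure.addHaar : Measure (kerR L)) (c • A) =
      ENNReal.ofReal (c ^ (m - r)) * (Measure.addHaar : Measure (kerR L)) A := by
    have h3 := Measure.addHaar_smul_of_nonneg (Measure.addHaar : Measure (kerR L)) hc A
    rw [finrank_kerR L hrank] at h3
    exact h3
  rw [h, Measure.smul_apply, Measure.smul_apply, h2]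
  simp only [ENNReal.smul_def, smul_eq_mul]
  ring

/-- base point -/
def basePt {r m : ℕ} (L : Matrix (Fin r) (Fin m) ℤ) (n : Fin r → ℤ) : Fin m → ℝ :=
  Classical.epsilon fun t => (∀ i, t i ∈ Set.Ico (0 : ℝ) 1) ∧
    ∀ a, ∑ i, (L a i : ℝ) * t i = n a

/-- The slice of the unit cube, moved to `ker_ℝ L`. -/
def slice {r m : ℕ} (L : Matrix (Fin r) (Fin m) ℤ) (n : Fin r → ℤ) : Set (kerR L) :=
  {v | ∀ i, basePt L n i + (v : Fin m → ℝ) i ∈ Set.Ico (0 : ℝ) 1}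

lemma measurableSet_slice {r m : ℕ} (L : Matrix (Fin r) (Fin m) ℤ) (n : Fin r → ℤ) :
    MeasurableSet (slice L n) := by
  rw [slice, Set.ofPred_forall]
  refine MeasurableSet.iInter fun i => ?_
  exact ((measurable_coord L i).const_add _) measurableSet_Ico

lemma injOn_slice {r m : ℕ} (L : Matrix (Fin r) (Fin m) ℤ) (n : Fin r → ℤ) (p : ℕ) (hp : 0 < p) :
    Set.InjOn (piK L) ((p : ℝ)⁻¹ • slice L n) := by
  rintro _ ⟨v, hv, rfl⟩ _ ⟨w, hw, rfl⟩ h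
  refine piK_eq h fun i => ?_
  have h1 := hv i
  have h2 := hw i
  have hp1 : (p : ℝ)⁻¹ ≤ 1 := inv_le_one_of_one_le₀ (by exact_mod_cast hp)
  have hp0 : 0 ≤ (p : ℝ)⁻¹ := by positivity
  simp only [Submodule.coe_smul, Pi.smul_apply, smul_eq_mul, ← mul_sub, abs_mul, abs_of_nonneg hp0]
  have h3 : |(v : Fin m → ℝ) i - (w : Fin m → ℝ) i| < 1 := by
    rw [abs_lt]; constructor <;> linarith [h1.1, h1.2, h2.1, h2.2]
  nlinarith [abs_nonneg ((v : Fin m → ℝ) i - (w : Fin m → ℝ) i)]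

/-- A bound for the entries of `L t`. -/
def bnd {r m : ℕ} (L : Matrix (Fin r) (Fin m) ℤ) : ℤ := ∑ a, ∑ i, |L a i|

lemma bnd_spec {r m : ℕ} (L : Matrix (Fin r) (Fin m) ℤ) {t : Fin m → ℝ}
    (ht : ∀ i, t i ∈ Set.Ico (0 : ℝ) 1) (a : Fin r) : |∑ i, (L a i : ℝ) * t i| ≤ bnd L := by
  calc |∑ i, (L a i : ℝ) * t i| ≤ ∑ i, |(L a i : ℝ) * t i| := Finset.abs_sum_le_sum_abs _ _
    _ ≤ ∑ i, |(L a i : ℝ)| := by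
        refine Finset.sum_le_sum fun i _ => ?_
        rw [abs_mul, abs_of_nonneg (ht i).1]
        exact mul_le_of_le_one_right (abs_nonneg _) (ht i).2.le
    _ ≤ ∑ a, ∑ i, |(L a i : ℝ)| :=
        Finset.single_le_sum (f := fun a => ∑ i, |(L a i : ℝ)|)
          (fun a _ => Finset.sum_nonneg fun i _ => abs_nonneg _) (Finset.mem_univ a)
    _ = bnd L := by simp [bnd]

lemma mem_E {r m : ℕ} (L : Matrix (Fin r) (Fin m) ℤ) (p : ℕ) (hp : 0 < p) (j : Fin m → ℤ)
    (x : kerT L) (hx : (x : Fin m → 𝕋) - discPt m p j ∈ cube0 m p) :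
    ∃ (t : Fin m → ℝ) (n q : Fin r → ℤ), (∀ i, t i ∈ Set.Ico (0 : ℝ) 1) ∧
      (x : Fin m → 𝕋) = (fun i => (((j i + t i) / p : ℝ) : 𝕋)) ∧
      (∀ a, ∑ i, (L a i : ℝ) * t i = n a) ∧ (∀ a, n a = p * q a - ∑ i, L a i * j i) := by
  have hp' : (0 : ℝ) < p := by exact_mod_cast hp
  have h1 : ∀ i, ∃ s ∈ Set.Ico (0 : ℝ) (1 / p), (s : 𝕋) = ((x : Fin m → 𝕋) - discPt m p j) i :=
    fun i => hx i (mem_univ i)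
  choose s hs hsx using h1
  have hx' : (x : Fin m → 𝕋) = (fun i => (((j i + p * s i) / p : ℝ) : 𝕋)) := by
    ext i
    have h2 : ((j i + p * s i) / p : ℝ) = (j i : ℝ) / p + s i := by field_simp
    rw [h2, AddCircle.coe_add, hsx i]
    simp [discPt]
  have hk := x.2
  rw [hx', mem_kerT_coe] at hk
  choose q hq using hk
  have key : ∀ a, ∑ i, (L a i : ℝ) * (p * s i) = p * q a - ∑ i, (L a i : ℝ) * j i := by
    intro a
    rw [hq a, Finset.mul_sum, ← Finset.sum_sub_distrib]
    refine Finset.sum_congr rfl fun i _ => ?_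
    field_simp
    ring
  refine ⟨fun i => p * s i, fun a => p * q a - ∑ i, L a i * j i, q, ?_, hx', ?_, fun a => rfl⟩
  · intro i
    refine ⟨mul_nonneg hp'.le (hs i).1, ?_⟩
    have := (hs i).2
    rw [lt_div_iff₀ hp'] at this
    linarith
  · intro a
    rw [key a]; push_cast; rfl

lemma E_measure {r m : ℕ} (L : Matrix (Fin r) (Fin m) ℤ) (μ : Measure (kerT L))
    [μ.IsAddLeftInvariant] (p : ℕ) (hp : 0 < p) (hpL : 2 * bnd L < p) (j : Fin m → ℤ)
    (hne : {x : kerT L | (x : Fin m → 𝕋) - discPt m p j ∈ cube0 m p}.Nonempty) :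
    ∃ n : Fin r → ℤ, (∀ a, n a ∈ Finset.Icc (-bnd L) (bnd L)) ∧
      μ {x : kerT L | (x : Fin m → 𝕋) - discPt m p j ∈ cube0 m p} =
        μ (piK L '' ((p : ℝ)⁻¹ • slice L n)) := by
  have hp' : (0 : ℝ) < p := by exact_mod_cast hp
  obtain ⟨x1, hx1⟩ := hne
  obtain ⟨t1, n, q, ht1, -, hn, hq⟩ := mem_E L p hp j x1 hx1
  have habs : ∀ (t : Fin m → ℝ) (n : Fin r → ℤ), (∀ i, t i ∈ Set.Ico (0 : ℝ) 1) →
      (∀ a, ∑ i, (L a i : ℝ) * t i = n a) → ∀ a, |n a| ≤ bnd L := by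
    intro t n ht hn a
    have := bnd_spec L ht a
    rw [hn a] at this
    exact_mod_cast this
  refine ⟨n, fun a => Finset.mem_Icc.2 (abs_le.1 (habs t1 n ht1 hn a)), ?_⟩
  have hb : (∀ i, basePt L n i ∈ Set.Ico (0 : ℝ) 1) ∧
      ∀ a, ∑ i, (L a i : ℝ) * basePt L n i = n a :=
    Classical.epsilon_spec (p := fun t : Fin m → ℝ => (∀ i, t i ∈ Set.Ico (0 : ℝ) 1) ∧
      ∀ a, ∑ i, (L a i : ℝ) * t i = n a) ⟨t1, ht1, hn⟩
  have hx0 : (fun i => (((j i + basePt L n i) / p : ℝ) : 𝕋)) ∈ kerT L := by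
    rw [mem_kerT_coe]
    intro a
    refine ⟨q a, ?_⟩
    have e1 : ∑ i, (L a i : ℝ) * ((j i + basePt L n i) / p) =
        (∑ i, (L a i : ℝ) * j i + ∑ i, (L a i : ℝ) * basePt L n i) / p := by
      rw [← Finset.sum_add_distrib, Finset.sum_div]
      exact Finset.sum_congr rfl fun i _ => by ring
    rw [e1, hb.2 a, hq a]
    push_cast
    field_simp
    ring
  rw [← measure_preimage_add μ (-⟨_, hx0⟩ : kerT L) (piK L '' ((p : ℝ)⁻¹ • slice L n))]
  congr 1
  ext x
  constructor
  · intro hx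
    obtain ⟨t, n', q', ht, hxt, hn', hq'⟩ := mem_E L p hp j x hx
    have hnn : n' = n := by
      ext a
      have h1 := abs_le.1 (habs t n' ht hn' a)
      have h2 := abs_le.1 (habs t1 n ht1 hn a)
      have h3 : n' a - n a = p * (q' a - q a) := by rw [hq, hq']; ring
      have h4 : n' a - n a = 0 := by
        refine Int.eq_zero_of_abs_lt_dvd ⟨_, h3⟩ ?_
        rw [abs_lt]; constructor <;> linarith
      linarith
    rw [hnn] at hn'
    have hv : (fun i => t i - basePt L n i) ∈ kerR L := by
      rw [mem_kerR]
      intro a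
      simp only [mul_sub, Finset.sum_sub_distrib]
      rw [hn' a, hb.2 a, sub_self]
    refine ⟨(p : ℝ)⁻¹ • ⟨_, hv⟩, Set.smul_mem_smul_set ?_, ?_⟩
    · intro i
      simpa using ht i
    · ext i
      have hxi := congrFun hxt i
      simp only [piK_apply, AddSubgroup.coe_add, AddSubgroup.coe_neg, Pi.add_apply, Pi.neg_apply]
      rw [hxi, ← AddCircle.coe_neg, ← AddCircle.coe_add]
      congr 1
      simp only [Submodule.coe_smul, Pi.smul_apply, smul_eq_mul]
      field_simp
      ring
  · rintro ⟨_, ⟨v, hv, rfl⟩, hx⟩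
    intro i _
    refine ⟨(basePt L n i + (v : Fin m → ℝ) i) / p, ⟨div_nonneg (hv i).1 hp'.le, ?_⟩, ?_⟩
    · exact div_lt_div_of_pos_right (hv i).2 hp'
    · have hx2 : x = ⟨_, hx0⟩ + piK L ((p : ℝ)⁻¹ • v) := by
        rw [hx]; simp
      rw [hx2]
      simp only [piK_apply, AddSubgroup.coe_add, Pi.add_apply, Pi.sub_apply, discPt]
      rw [← AddCircle.coe_add, ← AddCircle.coe_sub]
      congr 1
      simp only [Submodule.coe_smul, Pi.smul_apply, smul_eq_mul]
      field_simp
      ring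

/-- **The weights `λ(j)` take only finitely many positive values.**
Let `L` be an `r × m` integer matrix of full rank `r` and let `μL` be the Haar probability
measure on `ker_𝕋 L`. There is a finite set `Λ*` of positive reals, depending only on `L`,
such that for every sufficiently large positive integer `p` one has
`{λ(j) : j/p ∈ J(L,p)} ⊆ Λ*`. -/
theorem lambda_finitely_many_values {r m : ℕ} (L : Matrix (Fin r) (Fin m) ℤ)
    (hrank : (L.map (Int.cast : ℤ → ℚ)).rank = r)
    (μL : Measure (kerT L)) (hHaar : μL.IsAddHaarMeasure) (hprob : IsProbabilityMeasure μL) :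
    ∃ Λstar : Finset ℝ, (∀ t ∈ Λstar, 0 < t) ∧
      ∃ p₀ : ℕ, ∀ p : ℕ, p₀ ≤ p →
        ∀ j : Fin m → ℤ, discPt m p j ∈ Jset L p μL → lamVal L p μL j ∈ Λstar := by
  classical
  have := hprob
  have := hHaar
  refine ⟨((Fintype.piFinset fun _ : Fin r => Finset.Icc (-bnd L) (bnd L)).image
    fun n => (nu L μL (slice L n)).toReal).filter (0 < ·), ?_, (2 * bnd L + 1).toNat, ?_⟩
  · intro t ht
    exact (Finset.mem_filter.1 ht).2
  · intro p hp j hj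
    have hb0 : 0 ≤ bnd L :=
      Finset.sum_nonneg fun a _ => Finset.sum_nonneg fun i _ => abs_nonneg _
    have hpL : 2 * bnd L < p := by omega
    have hp0 : 0 < p := by omega
    have hp' : (0 : ℝ) < p := by exact_mod_cast hp0
    have hpos := hj.2
    obtain ⟨n, hn, hE⟩ := E_measure L μL p hp0 hpL j (nonempty_of_measure_ne_zero hpos.ne')
    rw [Finset.mem_filter]
    refine ⟨Finset.mem_image.2 ⟨n, Fintype.mem_piFinset.2 hn, ?_⟩, ?_⟩
    · rw [lamVal, hE, ← nu_of_injOn L μL ((measurableSet_slice L n).const_smul_of_ne_zero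
        (inv_ne_zero hp'.ne')) (injOn_slice L n p hp0), nu_smul L hrank μL _ (by positivity),
        ENNReal.toReal_mul, ENNReal.toReal_ofReal (by positivity), ← mul_assoc, ← mul_pow,
        mul_inv_cancel₀ hp'.ne', one_pow, one_mul]
    · exact mul_pos (pow_pos hp' _) (ENNReal.toReal_pos hpos.ne' (measure_ne_top _ _))
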